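/- There exists a constant C > 0 such that for all integers N ≥ 1, all t ∈ [0,1], and all α with N^{−3/4} ≤ α ≤ 2/3: |Q_t^N(α) − (2π)^{3/2}·(N·G_t''(α))^{−1/2}| ≤ C·(N·G_t''(α))^{−1/2}·(N·α)^{−1}; i.e., in the interior region the norming constant has the uniform Laplace asymptotics Q_t^N(α) = (2π)^{3/2}·(N·G_t''(α))^{−1/2}·(1 + O(1/(Nα))). -/

import Mathlib

/-
Substituting `x = α * (1 + y)` turns the norming integral into a Laplace integral with large
parameter `N * α`. Since `x * (1 - x) * G''` is bounded above and below (Guillemin's boundary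
behaviour), the rescaled phase is controlled uniformly as `α → 0`: it has a nondegenerate minimum at
`y = 0` and grows at least linearly far from it. The cubic term of its Taylor expansion is odd and
integrates to zero against the Gaussian, so the relative error is `1 / (N * α)` rather than
`1 / √(N * α)`. Uniformity in `t` holds because the bounds on `G` are preserved by convex
combinations.
-/

open Set Filter

noncomputable def GP : ℝ → ℝ := fun x => x * Real.log x + (1 - x) * Real.log (1 - x)

noncomputable def Gt (f0 f1 : ℝ → ℝ) (t : ℝ) : ℝ → ℝ :=
  fun x => GP x + ((1 - t) * f0 x + t * f1 x)

noncomputable def Phase (G : ℝ → ℝ) (α : ℝ) : ℝ → ℝ :=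
  fun x => (x - α) * deriv G x - (G x - G α)

noncomputable def Qnorm (G : ℝ → ℝ) (N : ℕ) (α : ℝ) : ℝ :=
  2 * Real.pi * ∫ x in (0:ℝ)..1, Real.exp (-(N : ℝ) * Phase G α x)

noncomputable def RPhase (G : ℝ → ℝ) (α : ℝ) : ℝ → ℝ :=
  fun y => (1 / α) * Phase G α (α * (1 + y))

noncomputable def Leg (G : ℝ → ℝ) (S : Set ℝ) : ℝ → ℝ :=
  fun ρ => sSup ((fun x => x * ρ - G x) '' S)

noncomputable def QQ (G : ℝ → ℝ) (N : ℕ) (α : ℝ) : ℝ :=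
  Qnorm G N α * Real.exp ((N : ℝ) * G α)

section ElementaryBounds

open Real

lemma abs_exp_neg_sub_linear_le {u v w : ℝ} (hu : w ≤ u) (hv : w ≤ v) :
    |exp (-u) - exp (-v) * (1 - (u - v))| ≤ (u - v) ^ 2 * exp (-w) := by
  have key : ∀ s t : ℝ, exp (-s) * (1 + (s - t)) ≤ exp (-t) := fun s t ↦ by
    calc exp (-s) * (1 + (s - t)) ≤ exp (-s) * exp (s - t) := by
          gcongr; linarith [add_one_le_exp (s - t)]
      _ = exp (-t) := by rw [← exp_add]; ring_nf
  have tangent := key v u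
  have secant := key u v
  rw [abs_of_nonneg (by linarith)]
  calc exp (-u) - exp (-v) * (1 - (u - v)) ≤ (u - v) * (exp (-v) - exp (-u)) := by linarith
    _ ≤ (u - v) ^ 2 * exp (-w) := by
      rcases le_total u v with huv | hvu
      · have hexp : exp (-u) ≤ exp (-w) := exp_le_exp.2 (by linarith)
        nlinarith [mul_le_mul_of_nonneg_left secant (sub_nonneg.2 huv),
          mul_le_mul_of_nonneg_left hexp (sq_nonneg (u - v))]
      · have hexp : exp (-v) ≤ exp (-w) := exp_le_exp.2 (by linarith)
        nlinarith [mul_le_mul_of_nonneg_left tangent (sub_nonneg.2 hvu),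
          mul_le_mul_of_nonneg_left hexp (sq_nonneg (u - v))]

lemma pow_mul_exp_neg_mul_sq_le {s : ℝ} (hs : 0 < s) (n : ℕ) (y : ℝ) :
    y ^ (2 * n) * exp (-s * y ^ 2) ≤ n.factorial * (2 / s) ^ n * exp (-(s / 2) * y ^ 2) := by
  have hpow : (s / 2 * y ^ 2) ^ n ≤ n.factorial * exp (s / 2 * y ^ 2) := by
    rw [← div_le_iff₀' (by positivity)]
    exact pow_div_factorial_le_exp _ (by positivity) n
  calc y ^ (2 * n) * exp (-s * y ^ 2)
      = (2 / s) ^ n * (s / 2 * y ^ 2) ^ n * exp (-s * y ^ 2) := by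
        rw [← mul_pow, pow_mul]; congr 2; field_simp
    _ ≤ (2 / s) ^ n * (n.factorial * exp (s / 2 * y ^ 2)) * exp (-s * y ^ 2) := by gcongr
    _ = n.factorial * (2 / s) ^ n * (exp (s / 2 * y ^ 2) * exp (-s * y ^ 2)) := by ring
    _ = n.factorial * (2 / s) ^ n * exp (-(s / 2) * y ^ 2) := by rw [← exp_add]; ring_nf

lemma exp_neg_le_inv_sqrt {v : ℝ} (hv : 0 < v) : exp (-(v / 2)) ≤ (√v)⁻¹ := by
  rw [exp_neg]
  gcongr
  rw [exp_half]
  gcongr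
  linarith [add_one_le_exp v]

end ElementaryBounds

section Integrals

open Real MeasureTheory

lemma integral_exp_neg_mul_abs {v : ℝ} (hv : 0 < v) : ∫ y : ℝ, exp (-v * |y|) = 2 / v := by
  rw [integral_comp_abs (f := fun y ↦ exp (-v * y)), integral_exp_mul_Ioi (neg_neg_of_pos hv)]
  simp [div_eq_mul_inv]

lemma integrable_exp_neg_mul_abs {v : ℝ} (hv : 0 < v) :
    Integrable fun y : ℝ ↦ exp (-v * |y|) :=
  .of_integral_ne_zero (by rw [integral_exp_neg_mul_abs hv]; positivity)

/-- The Gaussian `exp (-s * y ^ 2)` with the first-order correction caused by a cubic term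
`b * y ^ 3` in the exponent: the model to which Laplace integrands are compared. -/
noncomputable def cubicGaussian (s b y : ℝ) : ℝ := exp (-s * y ^ 2) * (1 - b * y ^ 3)

lemma integrable_pow_three_mul_gaussian {s : ℝ} (hs : 0 < s) :
    Integrable fun y : ℝ ↦ y ^ 3 * exp (-s * y ^ 2) := by
  simpa using! integrable_rpow_mul_exp_neg_mul_sq hs (s := (3 : ℕ)) (by norm_num)

lemma integral_pow_three_mul_gaussian (s : ℝ) : ∫ y : ℝ, y ^ 3 * exp (-s * y ^ 2) = 0 := by
  have hodd := integral_neg_eq_self (fun y : ℝ ↦ y ^ 3 * exp (-s * y ^ 2)) volume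
  simp only [neg_sq, Odd.neg_pow (by decide : Odd 3), neg_mul, integral_neg] at hodd ⊢
  linarith

lemma integrable_cubicGaussian {s : ℝ} (hs : 0 < s) (b : ℝ) : Integrable (cubicGaussian s b) := by
  refine ((integrable_exp_neg_mul_sq hs).sub
    ((integrable_pow_three_mul_gaussian hs).const_mul b)).congr (.of_forall fun y ↦ ?_)
  simp only [cubicGaussian, Pi.sub_apply]
  ring

lemma integral_cubicGaussian {s : ℝ} (hs : 0 < s) (b : ℝ) :
    ∫ y, cubicGaussian s b y = √(π / s) := by
  calc ∫ y, cubicGaussian s b y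
      = ∫ y, (exp (-s * y ^ 2) - b * (y ^ 3 * exp (-s * y ^ 2))) := by
        congr 1 with y; rw [cubicGaussian]; ring
    _ = √(π / s) := by
        rw [integral_sub (integrable_exp_neg_mul_sq hs)
          ((integrable_pow_three_mul_gaussian hs).const_mul b), integral_const_mul,
          integral_pow_three_mul_gaussian, integral_gaussian, mul_zero, sub_zero]

end Integrals

section Laplace

open Real MeasureTheory

/-- `R` is a phase on `S` suitable for Laplace's method at `0`: up to a quartic error it equals
`a / 2 * y ^ 2 + b * y ^ 3` on `[-r, r]`, where it dominates `m * y ^ 2`, and on the rest of `S` it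
dominates `m * |y|`. The bounds `m`, `K`, `r` are parameters, so that estimates depending only on
them are uniform in the phase. -/
structure IsLaplacePhase (m K r a b : ℝ) (S : Set ℝ) (R : ℝ → ℝ) : Prop where
  m_pos : 0 < m
  r_pos : 0 < r
  two_mul_le_quadratic : 2 * m ≤ a
  abs_cubic_le : |b| ≤ K
  measurableSet : MeasurableSet S
  Icc_subset : Icc (-r) r ⊆ S
  continuousOn : ContinuousOn R S
  taylor : ∀ y, |y| ≤ r → |R y - a / 2 * y ^ 2 - b * y ^ 3| ≤ K * y ^ 4
  quadratic : ∀ y, |y| ≤ r → m * y ^ 2 ≤ R y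
  linear : ∀ y ∈ S, r ≤ |y| → m * |y| ≤ R y

namespace IsLaplacePhase

variable {m K r a b l y : ℝ} {S : Set ℝ} {R : ℝ → ℝ}

lemma K_nonneg (h : IsLaplacePhase m K r a b S R) : 0 ≤ K :=
  (abs_nonneg b).trans h.abs_cubic_le

lemma gaussian_le (h : IsLaplacePhase m K r a b S R) (hl : 0 < l) :
    exp (-(l * (a / 2)) * y ^ 2) ≤ exp (-(l * m) * y ^ 2) := by
  gcongr
  linarith [h.two_mul_le_quadratic]

lemma abs_sub_quadratic_le (h : IsLaplacePhase m K r a b S R) (hy : |y| ≤ r) :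
    |R y - a / 2 * y ^ 2| ≤ K * (1 + r) * |y| ^ 3 := by
  have hK := h.K_nonneg
  have hcubic : |b * y ^ 3| ≤ K * |y| ^ 3 := by
    rw [abs_mul, abs_pow]
    gcongr
    exact h.abs_cubic_le
  have hquartic : K * y ^ 4 ≤ K * (r * |y| ^ 3) := by
    rw [← Even.pow_abs (by decide : Even 4), pow_succ' |y| 3]
    gcongr
  calc |R y - a / 2 * y ^ 2| ≤ |R y - a / 2 * y ^ 2 - b * y ^ 3| + |b * y ^ 3| :=
        sub_le_iff_le_add.1 (abs_sub_abs_le_abs_sub _ _)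
    _ ≤ K * (1 + r) * |y| ^ 3 := by linarith [h.taylor y hy]

lemma abs_exp_sub_cubicGaussian_le_mul_exp (h : IsLaplacePhase m K r a b S R) (hl : 0 < l)
    (hy : |y| ≤ r) :
    |exp (-(l * R y)) - cubicGaussian (l * (a / 2)) (l * b) y| ≤
      ((l * (K * (1 + r))) ^ 2 * y ^ 6 + l * (K * y ^ 4)) * exp (-(l * m) * y ^ 2) := by
  set v := l * (a / 2) * y ^ 2
  have hcubic : |l * R y - v - l * b * y ^ 3| ≤ l * (K * y ^ 4) := by
    rw [show l * R y - v - l * b * y ^ 3 = l * (R y - a / 2 * y ^ 2 - b * y ^ 3) by ring,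
      abs_mul, abs_of_pos hl]
    gcongr
    exact h.taylor y hy
  have hquad : (l * R y - v) ^ 2 ≤ (l * (K * (1 + r))) ^ 2 * y ^ 6 :=
    calc (l * R y - v) ^ 2 = l ^ 2 * |R y - a / 2 * y ^ 2| ^ 2 := by rw [sq_abs]; ring
      _ ≤ l ^ 2 * (K * (1 + r) * |y| ^ 3) ^ 2 := by gcongr; exact h.abs_sub_quadratic_le hy
      _ = (l * (K * (1 + r))) ^ 2 * y ^ 6 := by
        rw [mul_pow _ (|y| ^ 3), ← pow_mul, Even.pow_abs (by decide : Even (3 * 2))]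
        ring
  have hexpand : |exp (-(l * R y)) - exp (-v) * (1 - (l * R y - v))| ≤
      (l * R y - v) ^ 2 * exp (-(l * m * y ^ 2)) :=
    abs_exp_neg_sub_linear_le (by nlinarith [h.quadratic y hy])
      (by simp only [v]; gcongr; linarith [h.two_mul_le_quadratic])
  have hv : exp (-v) ≤ exp (-(l * m * y ^ 2)) := by
    simpa only [v, neg_mul] using h.gaussian_le hl
  calc |exp (-(l * R y)) - cubicGaussian (l * (a / 2)) (l * b) y|
      = |(exp (-(l * R y)) - exp (-v) * (1 - (l * R y - v))) -
          exp (-v) * (l * R y - v - l * b * y ^ 3)| := by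
        simp only [cubicGaussian, v]
        ring_nf
    _ ≤ (l * R y - v) ^ 2 * exp (-(l * m * y ^ 2)) +
          exp (-v) * |l * R y - v - l * b * y ^ 3| := by
        refine (abs_sub _ _).trans (add_le_add hexpand ?_)
        rw [abs_mul, abs_of_pos (exp_pos _)]
    _ ≤ (l * (K * (1 + r))) ^ 2 * y ^ 6 * exp (-(l * m * y ^ 2)) +
          exp (-(l * m * y ^ 2)) * (l * (K * y ^ 4)) := by gcongr
    _ = _ := by ring_nf

lemma abs_exp_sub_cubicGaussian_le (h : IsLaplacePhase m K r a b S R) (hl : 0 < l)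
    (hy : |y| ≤ r) :
    |exp (-(l * R y)) - cubicGaussian (l * (a / 2)) (l * b) y| ≤
      ((K * (1 + r)) ^ 2 * (48 / m ^ 3) + K * (8 / m ^ 2)) * l⁻¹ *
        exp (-(l * m / 2) * y ^ 2) := by
  have hm := h.m_pos
  have hK := h.K_nonneg
  calc |exp (-(l * R y)) - cubicGaussian (l * (a / 2)) (l * b) y|
      ≤ ((l * (K * (1 + r))) ^ 2 * y ^ 6 + l * (K * y ^ 4)) * exp (-(l * m) * y ^ 2) :=
        h.abs_exp_sub_cubicGaussian_le_mul_exp hl hy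
    _ = (l * (K * (1 + r))) ^ 2 * (y ^ (2 * 3) * exp (-(l * m) * y ^ 2)) +
          l * K * (y ^ (2 * 2) * exp (-(l * m) * y ^ 2)) := by ring
    _ ≤ (l * (K * (1 + r))) ^ 2 *
            (Nat.factorial 3 * (2 / (l * m)) ^ 3 * exp (-(l * m / 2) * y ^ 2)) +
          l * K * (Nat.factorial 2 * (2 / (l * m)) ^ 2 * exp (-(l * m / 2) * y ^ 2)) := by
        gcongr (l * (K * (1 + r))) ^ 2 * ?_ + l * K * ?_ <;>
          exact pow_mul_exp_neg_mul_sq_le (by positivity) _ _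
    _ = _ := by simp only [Nat.factorial]; push_cast; field_simp; ring

lemma abs_cubicGaussian_le (h : IsLaplacePhase m K r a b S R) (hl : 0 < l) (hy : r ≤ |y|) :
    |cubicGaussian (l * (a / 2)) (l * b) y| ≤
      (2 / (m * r ^ 2) + K * (8 / m ^ 2) / r) * l⁻¹ * exp (-(l * m / 2) * y ^ 2) := by
  have hm := h.m_pos
  have hr := h.r_pos
  have hK := h.K_nonneg
  have hone : 1 ≤ y ^ 2 / r ^ 2 := by
    rw [one_le_div (by positivity), ← sq_abs y]
    gcongr
  have hcubic : |y| ^ 3 ≤ y ^ 4 / r := by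
    rw [le_div_iff₀ hr, ← Even.pow_abs (by decide : Even 4), pow_succ |y| 3]
    gcongr
  have hfactor : |1 - l * b * y ^ 3| ≤ y ^ 2 / r ^ 2 + l * K * (y ^ 4 / r) :=
    calc |1 - l * b * y ^ 3| ≤ |1| + |l * b * y ^ 3| := abs_sub _ _
      _ = 1 + l * |b| * |y| ^ 3 := by rw [abs_one, abs_mul, abs_mul, abs_pow, abs_of_pos hl]
      _ ≤ y ^ 2 / r ^ 2 + l * K * (y ^ 4 / r) := by gcongr; exact h.abs_cubic_le
  calc |cubicGaussian (l * (a / 2)) (l * b) y|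
      = exp (-(l * (a / 2)) * y ^ 2) * |1 - l * b * y ^ 3| := by
        rw [cubicGaussian, abs_mul, abs_of_pos (exp_pos _)]
    _ ≤ exp (-(l * m) * y ^ 2) * (y ^ 2 / r ^ 2 + l * K * (y ^ 4 / r)) :=
        mul_le_mul (h.gaussian_le hl) hfactor (abs_nonneg _) (exp_pos _).le
    _ = (y ^ (2 * 1) * exp (-(l * m) * y ^ 2)) / r ^ 2 +
          l * K * ((y ^ (2 * 2) * exp (-(l * m) * y ^ 2)) / r) := by ring
    _ ≤ (Nat.factorial 1 * (2 / (l * m)) ^ 1 * exp (-(l * m / 2) * y ^ 2)) / r ^ 2 +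
          l * K * ((Nat.factorial 2 * (2 / (l * m)) ^ 2 * exp (-(l * m / 2) * y ^ 2)) / r) := by
        gcongr ?_ / r ^ 2 + l * K * (?_ / r) <;>
          exact pow_mul_exp_neg_mul_sq_le (by positivity) _ _
    _ = _ := by simp only [Nat.factorial]; push_cast; field_simp; ring

lemma exp_le (h : IsLaplacePhase m K r a b S R) (hl : 0 < l) (hyS : y ∈ S) (hy : r ≤ |y|) :
    exp (-(l * R y)) ≤ (√(l * m * r))⁻¹ * exp (-(l * m / 2) * |y|) := by
  have hm := h.m_pos
  have hr := h.r_pos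
  calc exp (-(l * R y)) ≤ exp (-(l * m * r / 2) + -(l * m / 2) * |y|) := by
        gcongr
        nlinarith [mul_le_mul_of_nonneg_left (h.linear y hyS hy) hl.le,
          mul_le_mul_of_nonneg_left hy (mul_pos hl hm).le]
    _ ≤ _ := by
        rw [exp_add]
        gcongr
        exact exp_neg_le_inv_sqrt (by positivity)

/-- The prefactor of the Gaussian in `majorant`. -/
noncomputable def gaussianConst (m K r : ℝ) : ℝ :=
  (K * (1 + r)) ^ 2 * (48 / m ^ 3) + K * (8 / m ^ 2) + (2 / (m * r ^ 2) + K * (8 / m ^ 2) / r)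

/-- An integrable bound for the difference between the Laplace integrand of a phase, extended by
zero outside its domain, and the cubic Gaussian model. -/
noncomputable def majorant (m K r l y : ℝ) : ℝ :=
  gaussianConst m K r * l⁻¹ * exp (-(l * m / 2) * y ^ 2) +
    (√(l * m * r))⁻¹ * exp (-(l * m / 2) * |y|)

/-- The constant in the Laplace asymptotics of a phase with parameters `m`, `K`, `r`. -/
noncomputable def laplaceConst (m K r : ℝ) : ℝ :=
  gaussianConst m K r * √(2 * π / m) + 4 / (m * √(m * r))

lemma laplaceConst_pos (hm : 0 < m) (hr : 0 < r) (hK : 0 ≤ K) : 0 < laplaceConst m K r := by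
  unfold laplaceConst gaussianConst
  positivity

lemma integrable_majorant (hm : 0 < m) (hl : 0 < l) : Integrable (majorant m K r l) :=
  ((integrable_exp_neg_mul_sq (by positivity)).const_mul _).add
    ((integrable_exp_neg_mul_abs (by positivity)).const_mul _)

lemma integral_majorant (hm : 0 < m) (hr : 0 < r) (hl : 0 < l) :
    ∫ y, majorant m K r l y = laplaceConst m K r * (l⁻¹ * (√l)⁻¹) := by
  have hs : 0 < l * m / 2 := by positivity
  have hgauss : √(π / (l * m / 2)) = √(2 * π / m) * (√l)⁻¹ := by
    rw [← sqrt_inv, ← sqrt_mul (by positivity)]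
    congr 1
    field_simp
  have htail : √(l * m * r) = √l * √(m * r) := by rw [mul_assoc, sqrt_mul hl.le]
  simp only [majorant]
  rw [integral_add ((integrable_exp_neg_mul_sq hs).const_mul _)
      ((integrable_exp_neg_mul_abs hs).const_mul _), integral_const_mul, integral_const_mul,
    integral_gaussian, integral_exp_neg_mul_abs hs, hgauss, htail, laplaceConst]
  have : 0 < √(m * r) := by positivity
  field_simp
  ring

lemma abs_indicator_sub_cubicGaussian_le (h : IsLaplacePhase m K r a b S R) (hl : 0 < l) (y : ℝ) :
    |S.indicator (fun y ↦ exp (-(l * R y))) y - cubicGaussian (l * (a / 2)) (l * b) y| ≤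
      majorant m K r l y := by
  have hm := h.m_pos
  have hr := h.r_pos
  have hK := h.K_nonneg
  simp only [majorant, gaussianConst, add_mul _ _ l⁻¹, add_mul _ _ (exp _)]
  rcases le_total |y| r with hy | hy
  · rw [indicator_of_mem (h.Icc_subset (abs_le.1 hy))]
    refine (h.abs_exp_sub_cubicGaussian_le hl hy).trans ?_
    rw [← add_mul, ← add_mul, add_assoc, le_add_iff_nonneg_right]
    positivity
  · have hphase : |S.indicator (fun y ↦ exp (-(l * R y))) y| ≤
        (√(l * m * r))⁻¹ * exp (-(l * m / 2) * |y|) := by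
      rw [abs_of_nonneg (indicator_nonneg (fun _ _ ↦ (exp_pos _).le) y)]
      exact indicator_apply_le' (fun hyS ↦ h.exp_le hl hyS hy) (fun _ ↦ by positivity)
    have hmodel := h.abs_cubicGaussian_le hl hy
    refine (abs_sub _ _).trans ?_
    have : 0 ≤ ((K * (1 + r)) ^ 2 * (48 / m ^ 3) + K * (8 / m ^ 2)) * l⁻¹ *
        exp (-(l * m / 2) * y ^ 2) := by positivity
    linarith

theorem abs_integral_sub_le (h : IsLaplacePhase m K r a b S R) (hl : 0 < l) :
    |(∫ y in S, exp (-(l * R y))) - √(2 * π / (l * a))| ≤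
      laplaceConst m K r * (l⁻¹ * (√l)⁻¹) := by
  have ha : 0 < a := by linarith [h.two_mul_le_quadratic, h.m_pos]
  set integrand := S.indicator fun y ↦ exp (-(l * R y))
  set model := cubicGaussian (l * (a / 2)) (l * b)
  have hmodel : Integrable model := integrable_cubicGaussian (by positivity) _
  have hmajorant := integrable_majorant (K := K) (r := r) h.m_pos hl
  have hdiff : Integrable (integrand - model) := by
    refine hmajorant.mono' (.sub ?_ hmodel.aestronglyMeasurable)
      (.of_forall (h.abs_indicator_sub_cubicGaussian_le hl))
    exact (aestronglyMeasurable_indicator_iff h.measurableSet).2 <|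
      (h.continuousOn.const_smul l).neg.rexp.aestronglyMeasurable h.measurableSet
  have hintegrand : Integrable integrand := by simpa using hdiff.add hmodel
  calc |(∫ y in S, exp (-(l * R y))) - √(2 * π / (l * a))|
      = |∫ y, (integrand y - model y)| := by
        rw [integral_sub hintegrand hmodel, integral_indicator h.measurableSet,
          integral_cubicGaussian (by positivity)]
        congr 3
        field_simp
    _ ≤ ∫ y, majorant m K r l y :=
        norm_integral_le_of_norm_le (f := fun y ↦ integrand y - model y) hmajorant
          (.of_forall (h.abs_indicator_sub_cubicGaussian_le hl))
    _ = _ := integral_majorant h.m_pos h.r_pos hl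

end IsLaplacePhase

end Laplace

section Calculus

lemma exists_eq_half_sq_mul {R g : ℝ → ℝ} {y : ℝ} (h0 : R 0 = 0)
    (hR : ∀ s ∈ uIcc 0 y, HasDerivAt R (s * g s) s) :
    ∃ ξ ∈ uIcc 0 y, R y = y ^ 2 / 2 * g ξ := by
  have hsq (s : ℝ) : HasDerivAt (fun s ↦ s ^ 2 / 2) s s := by
    simpa using (hasDerivAt_pow 2 s).div_const 2
  have hRcont : ContinuousOn R (uIcc 0 y) := fun s hs ↦ (hR s hs).continuousAt.continuousWithinAt
  have hsqcont : Continuous fun s : ℝ ↦ s ^ 2 / 2 := by fun_prop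
  rcases lt_trichotomy y 0 with hy | rfl | hy
  · rw [uIcc_of_ge hy.le] at *
    obtain ⟨ξ, hξ, h⟩ := exists_ratio_hasDerivAt_eq_ratio_slope R (fun s ↦ s * g s) hy hRcont
      (fun s hs ↦ hR s (Ioo_subset_Icc_self hs)) _ _ hsqcont.continuousOn fun s _ ↦ hsq s
    refine ⟨ξ, Ioo_subset_Icc_self hξ, mul_left_cancel₀ hξ.2.ne ?_⟩
    linear_combination h + ξ * h0
  · exact ⟨0, left_mem_uIcc, by simpa using h0⟩
  · rw [uIcc_of_le hy.le] at *
    obtain ⟨ξ, hξ, h⟩ := exists_ratio_hasDerivAt_eq_ratio_slope R (fun s ↦ s * g s) hy hRcont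
      (fun s hs ↦ hR s (Ioo_subset_Icc_self hs)) _ _ hsqcont.continuousOn fun s _ ↦ hsq s
    refine ⟨ξ, Ioo_subset_Icc_self hξ, mul_left_cancel₀ hξ.1.ne' ?_⟩
    linear_combination -h + ξ * h0

lemma abs_sub_sub_deriv_mul_le {F F' F'' : ℝ → ℝ} {x y K : ℝ}
    (hF : ∀ z ∈ uIcc x y, HasDerivAt F (F' z) z) (hF' : ∀ z ∈ uIcc x y, HasDerivAt F' (F'' z) z)
    (hK : ∀ z ∈ uIcc x y, |F'' z| ≤ K) :
    |F y - F x - F' x * (y - x)| ≤ K * (y - x) ^ 2 := by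
  have hK0 : 0 ≤ K := (abs_nonneg _).trans (hK x left_mem_uIcc)
  have hslope : ∀ z ∈ uIcc x y, |F' z - F' x| ≤ K * |y - x| := fun z hz ↦
    calc |F' z - F' x| ≤ K * |z - x| :=
          (convex_uIcc x y).norm_image_sub_le_of_norm_hasDerivWithin_le
            (fun w hw ↦ (hF' w hw).hasDerivWithinAt) hK left_mem_uIcc hz
      _ ≤ K * |y - x| := mul_le_mul_of_nonneg_left (abs_sub_left_of_mem_uIcc hz) hK0
  have hdiff : ∀ z ∈ uIcc x y,
      HasDerivWithinAt (fun z ↦ F z - F' x * z) (F' z - F' x) (uIcc x y) z := fun z hz ↦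
    ((hF z hz).fun_sub (hasDerivAt_const_mul (F' x))).hasDerivWithinAt
  calc |F y - F x - F' x * (y - x)| = |(F y - F' x * y) - (F x - F' x * x)| := by ring_nf
    _ ≤ K * |y - x| * |y - x| :=
        (convex_uIcc x y).norm_image_sub_le_of_norm_hasDerivWithin_le hdiff hslope
          left_mem_uIcc right_mem_uIcc
    _ = K * (y - x) ^ 2 := by rw [mul_assoc, abs_mul_abs_self, sq]

lemma hasDerivAt_iteratedDeriv_of_contDiffOn {f : ℝ → ℝ} {s : Set ℝ} {n k : ℕ} {x : ℝ}
    (hs : IsOpen s) (hf : ContDiffOn ℝ n f s) (hk : k < n) (hx : x ∈ s) :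
    HasDerivAt (iteratedDeriv k f) (iteratedDeriv (k + 1) f x) x := by
  have hdiff : DifferentiableAt ℝ (iteratedDerivWithin k f s) x :=
    (hf.differentiableOn_iteratedDerivWithin (mod_cast hk) hs.uniqueDiffOn).differentiableAt
      (hs.mem_nhds hx)
  have heq : iteratedDerivWithin k f s =ᶠ[nhds x] iteratedDeriv k f :=
    (iteratedDerivWithin_of_isOpen hs).eventuallyEq_of_mem (hs.mem_nhds hx)
  rw [iteratedDeriv_succ]
  exact (heq.differentiableAt_iff.1 hdiff).hasDerivAt

end Calculus

section SymplecticPotentials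

open Real

/-- Quantitative form, on the moment interval `(0, 1)`, of Guillemin's boundary conditions for a
toric symplectic potential: `x * (1 - x) * G''` is bounded below by `c`, and the derivatives of
order `k + 2` for `k ≤ 2` grow at the endpoints at most as fast as those of `GP`, with constant
`K`. -/
structure GuilleminBounds (c K : ℝ) (G : ℝ → ℝ) : Prop where
  contDiffOn : ContDiffOn ℝ 4 G (Ioo 0 1)
  le_mul_iteratedDeriv : ∀ x ∈ Ioo (0 : ℝ) 1, c ≤ x * (1 - x) * iteratedDeriv 2 G x
  mul_abs_iteratedDeriv_le : ∀ k ≤ 2, ∀ x ∈ Ioo (0 : ℝ) 1,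
    (x * (1 - x)) ^ (k + 1) * |iteratedDeriv (k + 2) G x| ≤ K

namespace GuilleminBounds

variable {c c' K K' t x : ℝ} {G G₀ G₁ : ℝ → ℝ}

lemma mono (h : GuilleminBounds c K G) (hc : c' ≤ c) (hK : K ≤ K') : GuilleminBounds c' K' G where
  contDiffOn := h.contDiffOn
  le_mul_iteratedDeriv x hx := hc.trans (h.le_mul_iteratedDeriv x hx)
  mul_abs_iteratedDeriv_le k hk x hx := (h.mul_abs_iteratedDeriv_le k hk x hx).trans hK

lemma contDiffAt (h : GuilleminBounds c K G) (hx : x ∈ Ioo (0 : ℝ) 1) {k : ℕ} (hk : k ≤ 4) :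
    ContDiffAt ℝ k G x :=
  (h.contDiffOn.contDiffAt (isOpen_Ioo.mem_nhds hx)).of_le (mod_cast hk)

lemma hasDerivAt_iteratedDeriv (h : GuilleminBounds c K G) (hx : x ∈ Ioo (0 : ℝ) 1) {k : ℕ}
    (hk : k < 4) : HasDerivAt (iteratedDeriv k G) (iteratedDeriv (k + 1) G x) x :=
  hasDerivAt_iteratedDeriv_of_contDiffOn isOpen_Ioo h.contDiffOn hk hx

lemma convex_combination (h₀ : GuilleminBounds c K G₀) (h₁ : GuilleminBounds c K G₁)
    (ht : t ∈ Icc (0 : ℝ) 1) : GuilleminBounds c K fun x ↦ (1 - t) * G₀ x + t * G₁ x := by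
  obtain ⟨ht₀, ht₁⟩ : 0 ≤ t ∧ 0 ≤ 1 - t := ⟨ht.1, sub_nonneg.2 ht.2⟩
  have hderiv (k : ℕ) (hk : k ≤ 4) (x : ℝ) (hx : x ∈ Ioo (0 : ℝ) 1) :
      iteratedDeriv k (fun x ↦ (1 - t) * G₀ x + t * G₁ x) x =
        (1 - t) * iteratedDeriv k G₀ x + t * iteratedDeriv k G₁ x := by
    rw [iteratedDeriv_fun_add (contDiffAt_const.mul (h₀.contDiffAt hx hk))
      (contDiffAt_const.mul (h₁.contDiffAt hx hk)), iteratedDeriv_const_mul_field,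
      iteratedDeriv_const_mul_field]
  refine ⟨(contDiffOn_const.mul h₀.contDiffOn).add (contDiffOn_const.mul h₁.contDiffOn),
    fun x hx ↦ ?_, fun k hk x hx ↦ ?_⟩
  · rw [hderiv 2 (by norm_num) x hx]
    nlinarith [mul_le_mul_of_nonneg_left (h₀.le_mul_iteratedDeriv x hx) ht₁,
      mul_le_mul_of_nonneg_left (h₁.le_mul_iteratedDeriv x hx) ht₀]
  · have hw : 0 ≤ (x * (1 - x)) ^ (k + 1) :=
      pow_nonneg (mul_nonneg hx.1.le (sub_nonneg.2 hx.2.le)) _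
    calc (x * (1 - x)) ^ (k + 1) *
            |iteratedDeriv (k + 2) (fun x ↦ (1 - t) * G₀ x + t * G₁ x) x|
        ≤ (x * (1 - x)) ^ (k + 1) *
            ((1 - t) * |iteratedDeriv (k + 2) G₀ x| + t * |iteratedDeriv (k + 2) G₁ x|) := by
          rw [hderiv (k + 2) (by lia) x hx]
          gcongr
          refine (abs_add_le _ _).trans_eq ?_
          rw [abs_mul, abs_mul, abs_of_nonneg ht₀, abs_of_nonneg ht₁]
      _ = (1 - t) * ((x * (1 - x)) ^ (k + 1) * |iteratedDeriv (k + 2) G₀ x|) +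
            t * ((x * (1 - x)) ^ (k + 1) * |iteratedDeriv (k + 2) G₁ x|) := by ring
      _ ≤ (1 - t) * K + t * K := by
          gcongr
          · exact h₀.mul_abs_iteratedDeriv_le k hk x hx
          · exact h₁.mul_abs_iteratedDeriv_le k hk x hx
      _ = K := by ring

end GuilleminBounds

lemma GP_eq_neg_binEntropy : GP = -binEntropy := by
  ext x
  simp only [GP, Pi.neg_apply, binEntropy, log_inv]
  ring

lemma contDiffOn_GP {n : WithTop ℕ∞} : ContDiffOn ℝ n GP (Ioo 0 1) := by
  intro x hx
  have h1 : 1 - x ≠ 0 := (sub_pos.2 hx.2).ne'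
  unfold GP
  exact ((contDiffAt_id.mul (contDiffAt_id.log hx.1.ne')).add
    ((contDiffAt_const.sub contDiffAt_id).mul
      ((contDiffAt_const.sub contDiffAt_id).log h1))).contDiffWithinAt

lemma eqOn_deriv_GP : EqOn (deriv GP) (fun x ↦ log x - log (1 - x)) (Ioo 0 1) := fun x hx ↦ by
  rw [GP_eq_neg_binEntropy, (hasDerivAt_binEntropy hx.1.ne' hx.2.ne).neg.deriv, neg_sub]

lemma eqOn_deriv_deriv_GP : EqOn (deriv (deriv GP)) (fun x ↦ x⁻¹ + (1 - x)⁻¹) (Ioo 0 1) :=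
  fun x hx ↦ by
  have hx' : 1 - x ≠ 0 := (sub_pos.2 hx.2).ne'
  rw [(eqOn_deriv_GP.eventuallyEq_of_mem (isOpen_Ioo.mem_nhds hx)).deriv_eq]
  refine (((hasDerivAt_log hx.1.ne').fun_sub
    (((hasDerivAt_id x).const_sub 1).log hx')).congr_deriv ?_).deriv
  simp [neg_div]

lemma iteratedDeriv_GP (n : ℕ) {x : ℝ} (hx : x ∈ Ioo (0 : ℝ) 1) :
    iteratedDeriv (n + 2) GP x =
      n.factorial * ((-1) ^ n * (x ^ (n + 1))⁻¹ + ((1 - x) ^ (n + 1))⁻¹) := by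
  have hx' : 1 - x ≠ 0 := (sub_pos.2 hx.2).ne'
  have hinv (z : ℝ) : iteratedDeriv n Inv.inv z = (-1) ^ n * n.factorial * (z ^ (n + 1))⁻¹ := by
    rw [iteratedDeriv_eq_iterate, iter_deriv_inv, ← zpow_natCast z, ← zpow_neg]
    push_cast
    ring_nf
  have hreflect : iteratedDeriv n (fun z : ℝ ↦ (1 - z)⁻¹) x =
      n.factorial * ((1 - x) ^ (n + 1))⁻¹ := by
    have := congrFun (iteratedDeriv_comp_const_sub n (Inv.inv : ℝ → ℝ) 1) x
    rw [this, hinv, smul_eq_mul, ← mul_assoc, ← mul_assoc, ← mul_pow]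
    simp
  rw [iteratedDeriv_succ', iteratedDeriv_succ',
    eqOn_deriv_deriv_GP.iteratedDeriv_of_isOpen isOpen_Ioo n hx,
    iteratedDeriv_fun_add (contDiffAt_inv ℝ hx.1.ne')
      (by fun_prop (disch := exact hx') : ContDiffAt ℝ n (fun z : ℝ ↦ (1 - z)⁻¹) x), hreflect,
    hinv]
  ring

lemma mul_abs_iteratedDeriv_GP_le (n : ℕ) {x : ℝ} (hx : x ∈ Ioo (0 : ℝ) 1) :
    (x * (1 - x)) ^ (n + 1) * |iteratedDeriv (n + 2) GP x| ≤ n.factorial := by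
  have h0 : 0 < x := hx.1
  have h1 : 0 < 1 - x := sub_pos.2 hx.2
  calc (x * (1 - x)) ^ (n + 1) * |iteratedDeriv (n + 2) GP x|
      ≤ (x * (1 - x)) ^ (n + 1) *
          (n.factorial * ((x ^ (n + 1))⁻¹ + ((1 - x) ^ (n + 1))⁻¹)) := by
        rw [iteratedDeriv_GP n hx, abs_mul, Nat.abs_cast]
        gcongr
        refine (abs_add_le _ _).trans_eq ?_
        rw [abs_mul, abs_neg_one_pow, one_mul, abs_of_pos (by positivity),
          abs_of_pos (by positivity)]
    _ = n.factorial * ((1 - x) ^ (n + 1) + x ^ (n + 1)) := by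
        rw [mul_pow]; field_simp
    _ ≤ n.factorial * ((1 - x) + x) := by
        gcongr
        · exact pow_le_of_le_one h1.le (by linarith) n.succ_ne_zero
        · exact pow_le_of_le_one h0.le hx.2.le n.succ_ne_zero
    _ = n.factorial := by ring

section GPAdd

variable {f : ℝ → ℝ}

lemma iteratedDeriv_GP_add (hf : ContDiff ℝ 4 f) {k : ℕ} (hk : k ≤ 4) {x : ℝ}
    (hx : x ∈ Ioo (0 : ℝ) 1) :
    iteratedDeriv k (GP + f) x = iteratedDeriv k GP x + iteratedDeriv k f x :=
  iteratedDeriv_add (contDiffOn_GP.contDiffAt (isOpen_Ioo.mem_nhds hx))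
    (hf.contDiffAt.of_le (mod_cast hk))

lemma mul_iteratedDeriv_two_GP_add (hf : ContDiff ℝ 4 f) {x : ℝ} (hx : x ∈ Ioo (0 : ℝ) 1) :
    x * (1 - x) * iteratedDeriv 2 (GP + f) x = 1 + x * (1 - x) * iteratedDeriv 2 f x := by
  have h0 : x ≠ 0 := hx.1.ne'
  have h1 : 1 - x ≠ 0 := (sub_pos.2 hx.2).ne'
  rw [iteratedDeriv_GP_add hf (by norm_num) hx, iteratedDeriv_GP 0 hx]
  simp only [Nat.factorial]
  field_simp
  ring

lemma exists_pos_le_mul_iteratedDeriv_two (hf : ContDiff ℝ 4 f)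
    (hpos : ∀ x ∈ Ioo (0 : ℝ) 1, 0 < iteratedDeriv 2 (GP + f) x) :
    ∃ c > 0, ∀ x ∈ Ioo (0 : ℝ) 1, c ≤ x * (1 - x) * iteratedDeriv 2 (GP + f) x := by
  have hcont : Continuous fun x ↦ 1 + x * (1 - x) * iteratedDeriv 2 f x := by
    have := hf.continuous_iteratedDeriv 2 (by norm_num)
    fun_prop
  obtain ⟨z, hz, hmin⟩ := isCompact_Icc.exists_isMinOn (nonempty_Icc.2 (zero_le_one' ℝ))
    hcont.continuousOn
  refine ⟨1 + z * (1 - z) * iteratedDeriv 2 f z, ?_, fun x hx ↦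
    (hmin (Ioo_subset_Icc_self hx)).trans_eq (mul_iteratedDeriv_two_GP_add hf hx).symm⟩
  rcases eq_endpoints_or_mem_Ioo_of_mem_Icc hz with rfl | rfl | hz
  · norm_num
  · norm_num
  · rw [← mul_iteratedDeriv_two_GP_add hf hz]
    exact mul_pos (mul_pos hz.1 (sub_pos.2 hz.2)) (hpos z hz)

lemma exists_mul_abs_iteratedDeriv_le (hf : ContDiff ℝ 4 f) :
    ∃ K, ∀ k ≤ 2, ∀ x ∈ Ioo (0 : ℝ) 1,
      (x * (1 - x)) ^ (k + 1) * |iteratedDeriv (k + 2) (GP + f) x| ≤ K := by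
  have hcont : ContinuousOn (fun x ↦ ∑ k ∈ Finset.range 3, |iteratedDeriv (k + 2) f x|)
      (Icc 0 1) := by
    refine continuousOn_finsetSum _ fun k hk ↦
      (hf.continuous_iteratedDeriv _ ?_).abs.continuousOn
    have : k + 2 ≤ 4 := by have := Finset.mem_range.1 hk; lia
    exact_mod_cast this
  obtain ⟨B, hB⟩ := isCompact_Icc.bddAbove_image hcont
  refine ⟨2 + B, fun k hk x hx ↦ ?_⟩
  have hf_le : |iteratedDeriv (k + 2) f x| ≤ B :=
    (Finset.single_le_sum (f := fun k ↦ |iteratedDeriv (k + 2) f x|) (fun _ _ ↦ abs_nonneg _)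
      (Finset.mem_range.2 (by lia))).trans (hB ⟨x, Ioo_subset_Icc_self hx, rfl⟩)
  have hfac : (k.factorial : ℝ) ≤ 2 := by exact_mod_cast Nat.factorial_le hk
  have h0 : 0 < x := hx.1
  have h1 : 0 < 1 - x := sub_pos.2 hx.2
  have hw : (x * (1 - x)) ^ (k + 1) ≤ 1 := pow_le_one₀ (by positivity) (by nlinarith)
  calc (x * (1 - x)) ^ (k + 1) * |iteratedDeriv (k + 2) (GP + f) x|
      ≤ (x * (1 - x)) ^ (k + 1) *
          (|iteratedDeriv (k + 2) GP x| + |iteratedDeriv (k + 2) f x|) := by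
        rw [iteratedDeriv_GP_add hf (by lia) hx]
        gcongr
        exact abs_add_le _ _
    _ = (x * (1 - x)) ^ (k + 1) * |iteratedDeriv (k + 2) GP x| +
          (x * (1 - x)) ^ (k + 1) * |iteratedDeriv (k + 2) f x| := mul_add _ _ _
    _ ≤ k.factorial + 1 * |iteratedDeriv (k + 2) f x| := by
        gcongr
        exact mul_abs_iteratedDeriv_GP_le k hx
    _ ≤ 2 + B := by linarith

theorem exists_guilleminBounds_GP_add (hf : ContDiff ℝ 4 f)
    (hpos : ∀ x ∈ Ioo (0 : ℝ) 1, 0 < iteratedDeriv 2 (GP + f) x) :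
    ∃ c > 0, ∃ K, GuilleminBounds c K (GP + f) := by
  obtain ⟨c, hc, hlower⟩ := exists_pos_le_mul_iteratedDeriv_two hf hpos
  obtain ⟨K, hupper⟩ := exists_mul_abs_iteratedDeriv_le hf
  exact ⟨c, hc, K, contDiffOn_GP.add hf.contDiffOn, hlower, hupper⟩

end GPAdd

end SymplecticPotentials

section Phases

open Real MeasureTheory

lemma hasDerivAt_Phase {G : ℝ → ℝ} {α x : ℝ} (hG : DifferentiableAt ℝ G x)
    (hG' : DifferentiableAt ℝ (deriv G) x) :
    HasDerivAt (Phase G α) ((x - α) * iteratedDeriv 2 G x) x := by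
  refine ((((hasDerivAt_id x).sub_const α).mul hG'.hasDerivAt).sub
    (hG.hasDerivAt.sub_const (G α))).congr_deriv ?_
  simp [iteratedDeriv_succ, iteratedDeriv_zero]

/-- The preimage of the moment interval `(0, 1)` under the rescaling `y ↦ α * (1 + y)`. -/
def rescaledInterval (α : ℝ) : Set ℝ := Ioo (-1) (1 / α - 1)

lemma zero_mem_rescaledInterval {α : ℝ} (hα : α ∈ Ioo (0 : ℝ) 1) : 0 ∈ rescaledInterval α :=
  ⟨by norm_num, sub_pos.2 ((one_lt_div hα.1).2 hα.2)⟩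

lemma Icc_subset_rescaledInterval {α δ : ℝ} (hα : α ∈ Ioc 0 (1 - δ)) (hδ : 0 < δ) :
    Icc (-(δ / 2)) (δ / 2) ⊆ rescaledInterval α := by
  have hinv : 1 + δ ≤ 1 / α := by
    rw [le_div_iff₀' hα.1]
    nlinarith [hα.1, hα.2]
  exact Icc_subset_Ioo (by linarith [hα.1, hα.2]) (by linarith)

lemma mul_one_add_mem_Ioo {α y : ℝ} (hα : 0 < α) (hy : y ∈ rescaledInterval α) :
    α * (1 + y) ∈ Ioo (0 : ℝ) 1 := by
  have hy1 : 1 + y < 1 / α := by linarith [hy.2]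
  rw [lt_div_iff₀' hα] at hy1
  exact ⟨mul_pos hα (by linarith [hy.1]), hy1⟩

lemma Qnorm_eq_integral_RPhase (G : ℝ → ℝ) (N : ℕ) {α : ℝ} (hα : 0 < α) :
    Qnorm G N α =
      2 * π * (α * ∫ y in rescaledInterval α, exp (-(N * α * RPhase G α y))) := by
  have hscale : ∫ y in (-1 : ℝ)..(1 / α - 1), exp (-(N : ℝ) * Phase G α (α * y + α)) =
      α⁻¹ * ∫ x in (0 : ℝ)..1, exp (-(N : ℝ) * Phase G α x) := by
    rw [intervalIntegral.integral_comp_mul_add (fun x ↦ exp (-(N : ℝ) * Phase G α x)) hα.ne',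
      smul_eq_mul, show α * -1 + α = 0 by ring, show α * (1 / α - 1) + α = 1 by field_simp; ring]
  have hphase (y : ℝ) : N * α * RPhase G α y = N * Phase G α (α * y + α) := by
    rw [RPhase, show α * (1 + y) = α * y + α by ring]
    field_simp
  simp only [hphase, ← neg_mul]
  rw [rescaledInterval, ← integral_Ioc_eq_integral_Ioo,
    ← intervalIntegral.integral_of_le (by linarith [one_div_pos.2 hα]), hscale,
    mul_inv_cancel_left₀ hα.ne', Qnorm]

/-- The `k`-th derivative of `y ↦ α * G'' (α * (1 + y))`, the function `g` for which the rescaled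
phase satisfies `(RPhase G α)' y = y * g y`. -/
noncomputable def rescaledDeriv (G : ℝ → ℝ) (α : ℝ) (k : ℕ) (y : ℝ) : ℝ :=
  α ^ (k + 1) * iteratedDeriv (k + 2) G (α * (1 + y))

namespace GuilleminBounds

variable {c K α δ y : ℝ} {G : ℝ → ℝ}

lemma hasDerivAt_RPhase (h : GuilleminBounds c K G) (hα : 0 < α)
    (hy : y ∈ rescaledInterval α) :
    HasDerivAt (RPhase G α) (y * rescaledDeriv G α 0 y) y := by
  have hx := mul_one_add_mem_Ioo hα hy
  have hG : DifferentiableAt ℝ G (α * (1 + y)) := by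
    simpa only [iteratedDeriv_zero] using
      (h.hasDerivAt_iteratedDeriv hx (k := 0) (by norm_num)).differentiableAt
  have hG' : DifferentiableAt ℝ (deriv G) (α * (1 + y)) := by
    simpa only [iteratedDeriv_one] using
      (h.hasDerivAt_iteratedDeriv hx (k := 1) (by norm_num)).differentiableAt
  have hscale : HasDerivAt (fun y ↦ α * (1 + y)) α y := by
    simpa using ((hasDerivAt_id y).const_add 1).const_mul α
  refine (((hasDerivAt_Phase hG hG').comp y hscale).const_mul (1 / α)).congr_deriv ?_
  simp only [rescaledDeriv]
  field_simp
  ring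

lemma hasDerivAt_rescaledDeriv (h : GuilleminBounds c K G) (hα : 0 < α)
    (hy : y ∈ rescaledInterval α) {k : ℕ} (hk : k < 2) :
    HasDerivAt (rescaledDeriv G α k) (rescaledDeriv G α (k + 1) y) y := by
  have hscale : HasDerivAt (fun y ↦ α * (1 + y)) α y := by
    simpa using ((hasDerivAt_id y).const_add 1).const_mul α
  refine (((h.hasDerivAt_iteratedDeriv (mul_one_add_mem_Ioo hα hy) (k := k + 2) (by lia)).comp y
    hscale).const_mul (α ^ (k + 1))).congr_deriv ?_
  rw [rescaledDeriv]
  ring_nf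

lemma le_mul_rescaledDeriv (h : GuilleminBounds c K G) (hc : 0 < c) (hα : 0 < α)
    (hy : y ∈ rescaledInterval α) : c ≤ (1 + y) * rescaledDeriv G α 0 y := by
  have hx := mul_one_add_mem_Ioo hα hy
  have hlower := h.le_mul_iteratedDeriv _ hx
  have hy1 : 0 < 1 + y := by linarith [hy.1]
  have hG : 0 < iteratedDeriv 2 G (α * (1 + y)) :=
    (mul_pos_iff_of_pos_left (mul_pos hx.1 (sub_pos.2 hx.2))).1 (hc.trans_le hlower)
  have hprod : 0 < α * (1 + y) * (α * (1 + y)) * iteratedDeriv 2 G (α * (1 + y)) := by positivity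
  simp only [rescaledDeriv, zero_add, pow_one]
  linarith

lemma abs_rescaledDeriv_le (h : GuilleminBounds c K G) (hα : α ∈ Ioc 0 (1 - δ)) (hδ : 0 < δ)
    (hy : |y| ≤ δ / 2) {k : ℕ} (hk : k ≤ 2) : |rescaledDeriv G α k y| ≤ K * (4 / δ) ^ (k + 1) := by
  obtain ⟨hα0, hα1⟩ := hα
  have hx := mul_one_add_mem_Ioo hα0 (Icc_subset_rescaledInterval ⟨hα0, hα1⟩ hδ (abs_le.1 hy))
  set x := α * (1 + y)
  obtain ⟨hy0, hy1⟩ := abs_le.1 hy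
  have hleft : α / 2 ≤ x := by nlinarith
  have hright : δ / 2 ≤ 1 - x := by nlinarith
  have hweight : α ≤ 4 / δ * (x * (1 - x)) :=
    calc α = 4 / δ * (α / 2 * (δ / 2)) := by field_simp; norm_num
      _ ≤ 4 / δ * (x * (1 - x)) := by gcongr; exact hx.1.le
  calc |rescaledDeriv G α k y| = α ^ (k + 1) * |iteratedDeriv (k + 2) G x| := by
        rw [rescaledDeriv, abs_mul, abs_of_pos (pow_pos hα0 _)]
    _ ≤ (4 / δ * (x * (1 - x))) ^ (k + 1) * |iteratedDeriv (k + 2) G x| := by gcongr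
    _ = (x * (1 - x)) ^ (k + 1) * |iteratedDeriv (k + 2) G x| * (4 / δ) ^ (k + 1) := by
        rw [mul_pow]; ring
    _ ≤ K * (4 / δ) ^ (k + 1) := by gcongr; exact h.mul_abs_iteratedDeriv_le k hk x hx

lemma abs_rescaledDeriv_le_cube (h : GuilleminBounds c K G) (hα : α ∈ Ioc 0 (1 - δ))
    (hδ : 0 < δ) (hy : |y| ≤ δ / 2) {k : ℕ} (hk : k ≤ 2) :
    |rescaledDeriv G α k y| ≤ K * (4 / δ) ^ 3 := by
  refine (h.abs_rescaledDeriv_le hα hδ hy hk).trans ?_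
  have hK : 0 ≤ K := le_trans (by positivity)
    (h.mul_abs_iteratedDeriv_le 1 (by norm_num) (1 / 2) (by norm_num))
  have hδ4 : 1 ≤ 4 / δ := by rw [one_le_div hδ]; linarith [hα.1, hα.2]
  gcongr
  lia

lemma div_mul_sq_le_RPhase (h : GuilleminBounds c K G) (hc : 0 < c) (hα : α ∈ Ioo (0 : ℝ) 1)
    (hy : y ∈ rescaledInterval α) : c / (1 + |y|) * (y ^ 2 / 2) ≤ RPhase G α y := by
  have hsub : uIcc 0 y ⊆ rescaledInterval α :=
    ordConnected_Ioo.uIcc_subset (zero_mem_rescaledInterval hα) hy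
  obtain ⟨ξ, hξ, hR⟩ := exists_eq_half_sq_mul (by simp [RPhase, Phase])
    fun s hs ↦ h.hasDerivAt_RPhase hα.1 (hsub hs)
  have hξ0 : 0 < 1 + ξ := by linarith [(hsub hξ).1]
  have hξy : 1 + ξ ≤ 1 + |y| := by
    have := abs_sub_left_of_mem_uIcc hξ
    rw [sub_zero, sub_zero] at this
    linarith [le_abs_self ξ]
  rw [hR, mul_comm]
  gcongr
  calc c / (1 + |y|) ≤ c / (1 + ξ) := by gcongr
    _ ≤ rescaledDeriv G α 0 ξ := by
      rw [div_le_iff₀' hξ0]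
      exact h.le_mul_rescaledDeriv hc hα.1 (hsub hξ)

lemma abs_RPhase_sub_cubic_le (h : GuilleminBounds c K G) (hα : α ∈ Ioc 0 (1 - δ)) (hδ : 0 < δ)
    (hy : |y| ≤ δ / 2) :
    |RPhase G α y - rescaledDeriv G α 0 0 / 2 * y ^ 2 - rescaledDeriv G α 1 0 / 3 * y ^ 3| ≤
      K * (4 / δ) ^ 3 * y ^ 4 := by
  set g := rescaledDeriv G α
  have hsmall : ∀ s ∈ uIcc 0 y, |s| ≤ δ / 2 := fun s hs ↦ by
    simpa using (abs_sub_left_of_mem_uIcc hs).trans (by simpa using hy)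
  have hsub : ∀ s ∈ uIcc 0 y, s ∈ rescaledInterval α := fun s hs ↦
    Icc_subset_rescaledInterval hα hδ (abs_le.1 (hsmall s hs))
  have hg : ∀ s ∈ uIcc 0 y, |g 0 s - g 0 0 - g 1 0 * s| ≤ K * (4 / δ) ^ 3 * s ^ 2 := by
    intro s hs
    have hs' : uIcc 0 s ⊆ uIcc 0 y := uIcc_subset_uIcc_left hs
    simpa using abs_sub_sub_deriv_mul_le
      (fun z hz ↦ h.hasDerivAt_rescaledDeriv hα.1 (hsub z (hs' hz)) (k := 0) (by norm_num))
      (fun z hz ↦ h.hasDerivAt_rescaledDeriv hα.1 (hsub z (hs' hz)) (k := 1) (by norm_num))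
      (fun z hz ↦ h.abs_rescaledDeriv_le hα hδ (hsmall z (hs' hz)) le_rfl)
  obtain ⟨ξ, hξ, hR⟩ := exists_eq_half_sq_mul
    (R := fun s ↦ RPhase G α s - g 0 0 / 2 * s ^ 2 - g 1 0 / 3 * s ^ 3)
    (g := fun s ↦ g 0 s - g 0 0 - g 1 0 * s) (y := y) (by simp [RPhase, Phase]) fun s hs ↦ by
      refine (((h.hasDerivAt_RPhase hα.1 (hsub s hs)).sub
        ((hasDerivAt_pow 2 s).const_mul (g 0 0 / 2))).sub
        ((hasDerivAt_pow 3 s).const_mul (g 1 0 / 3))).congr_deriv ?_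
      push_cast
      ring
  have hξy : ξ ^ 2 ≤ y ^ 2 := sq_le_sq.2 (by simpa using abs_sub_left_of_mem_uIcc hξ)
  have hK : 0 ≤ K * (4 / δ) ^ 3 :=
    (abs_nonneg _).trans (h.abs_rescaledDeriv_le hα hδ hy le_rfl)
  calc _ = y ^ 2 / 2 * |g 0 ξ - g 0 0 - g 1 0 * ξ| := by
        rw [hR, abs_mul, abs_of_nonneg (by positivity)]
    _ ≤ y ^ 2 * (K * (4 / δ) ^ 3 * y ^ 2) := by
        gcongr
        · linarith [sq_nonneg y]
        · exact (hg ξ hξ).trans (by gcongr)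
    _ = K * (4 / δ) ^ 3 * y ^ 4 := by ring

theorem isLaplacePhase (h : GuilleminBounds c K G) (hc : 0 < c) (hα : α ∈ Ioc 0 (1 - δ))
    (hδ : 0 < δ) :
    IsLaplacePhase (c * δ / 8) (K * (4 / δ) ^ 3) (δ / 2) (rescaledDeriv G α 0 0)
      (rescaledDeriv G α 1 0 / 3) (rescaledInterval α) (RPhase G α) := by
  obtain ⟨hα0, hα1⟩ := hα
  have : δ < 1 := by linarith
  have hsub := Icc_subset_rescaledInterval ⟨hα0, hα1⟩ hδ
  have hlower {y : ℝ} (hy : y ∈ rescaledInterval α) :=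
    h.div_mul_sq_le_RPhase hc ⟨hα0, by linarith⟩ hy
  refine
    { m_pos := by positivity
      r_pos := by positivity
      two_mul_le_quadratic := ?_
      abs_cubic_le := ?_
      measurableSet := measurableSet_Ioo
      Icc_subset := hsub
      continuousOn := fun y hy ↦ (h.hasDerivAt_RPhase hα0 hy).continuousAt.continuousWithinAt
      taylor := fun y hy ↦ h.abs_RPhase_sub_cubic_le ⟨hα0, hα1⟩ hδ hy
      quadratic := fun y hy ↦ (?_ : _ ≤ _).trans (hlower (hsub (abs_le.1 hy)))
      linear := fun y hyS hy ↦ (?_ : _ ≤ _).trans (hlower hyS) }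
  · have := h.le_mul_rescaledDeriv hc hα0 (zero_mem_rescaledInterval ⟨hα0, by linarith⟩)
    nlinarith
  · have := h.abs_rescaledDeriv_le_cube ⟨hα0, hα1⟩ hδ (y := 0) (by simpa using (half_pos hδ).le)
      (k := 1) (by norm_num)
    rw [abs_div, abs_of_pos (three_pos (α := ℝ))]
    linarith [abs_nonneg (rescaledDeriv G α 1 0)]
  · have hδy : δ * (1 + |y|) ≤ 4 := by nlinarith [abs_nonneg y]
    rw [div_mul_eq_mul_div c, le_div_iff₀ (by positivity)]
    nlinarith [mul_le_mul_of_nonneg_left hδy (mul_nonneg hc.le (sq_nonneg y))]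
  · have hδy : δ * (1 + |y|) ≤ 4 * |y| := by nlinarith [abs_nonneg y]
    rw [div_mul_eq_mul_div c, le_div_iff₀ (by positivity), ← sq_abs y]
    nlinarith [mul_le_mul_of_nonneg_left hδy (mul_nonneg hc.le (abs_nonneg y))]

end GuilleminBounds

end Phases

section NormingConstant

open Real

lemma rpow_three_halves {x : ℝ} (hx : 0 < x) : x ^ ((3 : ℝ) / 2) = x * √x := by
  rw [show (3 : ℝ) / 2 = 1 + 1 / 2 by norm_num, rpow_add hx, rpow_one, ← sqrt_eq_rpow]

lemma rpow_neg_one_half {x : ℝ} (hx : 0 ≤ x) : x ^ (-(1 : ℝ) / 2) = (√x)⁻¹ := by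
  rw [neg_div, rpow_neg hx, ← sqrt_eq_rpow]

lemma inv_sqrt_le_mul_inv_sqrt_mul {l a B : ℝ} (hl : 0 ≤ l) (ha : 0 < a) (haB : a ≤ B) :
    (√l)⁻¹ ≤ √B * (√(l * a))⁻¹ :=
  calc (√l)⁻¹ = √a * (√(l * a))⁻¹ := by
        rw [sqrt_mul hl, mul_inv, mul_left_comm, mul_inv_cancel₀ (sqrt_pos.2 ha).ne', mul_one]
    _ ≤ √B * (√(l * a))⁻¹ := by gcongr

/-- The constant in the Laplace asymptotics of the norming constants `Qnorm G N α`, uniform in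
`α ≤ 1 - δ` and in the potentials `G` satisfying `GuilleminBounds c K`. -/
noncomputable def normingErrorConst (c K δ : ℝ) : ℝ :=
  2 * π * IsLaplacePhase.laplaceConst (c * δ / 8) (K * (4 / δ) ^ 3) (δ / 2) *
    √(K * (4 / δ) ^ 3)

lemma normingErrorConst_pos {c K δ : ℝ} (hc : 0 < c) (hK : 0 < K) (hδ : 0 < δ) :
    0 < normingErrorConst c K δ := by
  have := IsLaplacePhase.laplaceConst_pos (K := K * (4 / δ) ^ 3) (m := c * δ / 8)
    (r := δ / 2) (by positivity) (by positivity) (by positivity)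
  unfold normingErrorConst
  positivity

lemma mul_iteratedDeriv_rpow_eq {G : ℝ → ℝ} {α v : ℝ} (hα : 0 < α)
    (hpos : 0 < v * α * rescaledDeriv G α 0 0) :
    (v * iteratedDeriv 2 G α) ^ (-(1 : ℝ) / 2) = α * (√(v * α * rescaledDeriv G α 0 0))⁻¹ := by
  have hsq : v * α * rescaledDeriv G α 0 0 = α ^ 2 * (v * iteratedDeriv 2 G α) := by
    simp only [rescaledDeriv, zero_add, add_zero, mul_one, pow_one]
    ring
  have hnonneg : 0 ≤ v * iteratedDeriv 2 G α :=
    (pos_of_mul_pos_right (hsq ▸ hpos) (sq_nonneg α)).le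
  rw [rpow_neg_one_half hnonneg, hsq, sqrt_mul (sq_nonneg α), sqrt_sq hα.le, mul_inv,
    mul_inv_cancel_left₀ hα.ne']

theorem GuilleminBounds.abs_Qnorm_sub_le {c K δ α : ℝ} {G : ℝ → ℝ} (h : GuilleminBounds c K G)
    (hc : 0 < c) (hα : α ∈ Ioc 0 (1 - δ)) (hδ : 0 < δ) {N : ℕ} (hN : 1 ≤ N) :
    |Qnorm G N α - (2 * π) ^ ((3 : ℝ) / 2) * (N * iteratedDeriv 2 G α) ^ (-(1 : ℝ) / 2)| ≤
      normingErrorConst c K δ * (N * iteratedDeriv 2 G α) ^ (-(1 : ℝ) / 2) * (N * α)⁻¹ := by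
  have hα0 := hα.1
  have hphase := h.isLaplacePhase hc hα hδ
  set m := c * δ / 8
  set B := K * (4 / δ) ^ 3
  set a := rescaledDeriv G α 0 0
  set l := N * α
  have ha : 0 < a := by linarith [hphase.two_mul_le_quadratic, hphase.m_pos]
  have haB : a ≤ B := (le_abs_self a).trans
    (h.abs_rescaledDeriv_le_cube hα hδ (by simpa using (half_pos hδ).le) (by norm_num))
  have hl : 0 < l := mul_pos (by exact_mod_cast hN) hα0
  have hL := IsLaplacePhase.laplaceConst_pos hphase.m_pos hphase.r_pos hphase.K_nonneg
  have hmain := mul_iteratedDeriv_rpow_eq (G := G) hα0 (mul_pos hl ha)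
  have herror : Qnorm G N α -
      (2 * π) ^ ((3 : ℝ) / 2) * (N * iteratedDeriv 2 G α) ^ (-(1 : ℝ) / 2) = 2 * π * α *
        ((∫ y in rescaledInterval α, exp (-(l * RPhase G α y))) - √(2 * π / (l * a))) := by
    rw [Qnorm_eq_integral_RPhase G N hα0, rpow_three_halves (by positivity), hmain,
      sqrt_div (by positivity)]
    ring
  calc |Qnorm G N α - (2 * π) ^ ((3 : ℝ) / 2) * (N * iteratedDeriv 2 G α) ^ (-(1 : ℝ) / 2)|
      = 2 * π * α *
          |(∫ y in rescaledInterval α, exp (-(l * RPhase G α y))) - √(2 * π / (l * a))| := by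
        rw [herror, abs_mul, abs_of_pos (by positivity)]
    _ ≤ 2 * π * α * (IsLaplacePhase.laplaceConst m B (δ / 2) * (l⁻¹ * (√l)⁻¹)) := by
        gcongr
        exact hphase.abs_integral_sub_le hl
    _ ≤ 2 * π * α *
          (IsLaplacePhase.laplaceConst m B (δ / 2) * (l⁻¹ * (√B * (√(l * a))⁻¹))) := by
        gcongr
        exact inv_sqrt_le_mul_inv_sqrt_mul hl.le ha haB
    _ = normingErrorConst c K δ * (N * iteratedDeriv 2 G α) ^ (-(1 : ℝ) / 2) * l⁻¹ := by
        rw [hmain, normingErrorConst]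
        ring

end NormingConstant

lemma Gt_eq_convex_combination (f0 f1 : ℝ → ℝ) (t : ℝ) :
    Gt f0 f1 t = fun x ↦ (1 - t) * (GP + f0) x + t * (GP + f1) x := by
  ext x
  simp only [Gt, Pi.add_apply]
  ring

theorem exists_guilleminBounds_Gt {f0 f1 : ℝ → ℝ} (hf0 : ContDiff ℝ 4 f0) (hf1 : ContDiff ℝ 4 f1)
    (hG0 : ∀ x ∈ Ioo (0 : ℝ) 1, 0 < iteratedDeriv 2 (Gt f0 f1 0) x)
    (hG1 : ∀ x ∈ Ioo (0 : ℝ) 1, 0 < iteratedDeriv 2 (Gt f0 f1 1) x) :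
    ∃ c > 0, ∃ K > 0, ∀ t ∈ Icc (0 : ℝ) 1, GuilleminBounds c K (Gt f0 f1 t) := by
  have hGt0 : Gt f0 f1 0 = GP + f0 := by ext; simp [Gt]
  have hGt1 : Gt f0 f1 1 = GP + f1 := by ext; simp [Gt]
  obtain ⟨c₀, hc₀, K₀, h₀⟩ := exists_guilleminBounds_GP_add hf0 (hGt0 ▸ hG0)
  obtain ⟨c₁, hc₁, K₁, h₁⟩ := exists_guilleminBounds_GP_add hf1 (hGt1 ▸ hG1)
  refine ⟨min c₀ c₁, lt_min hc₀ hc₁, max 1 (max K₀ K₁), by positivity, fun t ht ↦ ?_⟩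
  rw [Gt_eq_convex_combination]
  exact (h₀.mono (min_le_left _ _) (by simp)).convex_combination
    (h₁.mono (min_le_right _ _) (by simp)) ht

theorem bergman_cp1_interior_laplace_asymptotics_of_Q_general
    {f0 f1 : ℝ → ℝ} (hf0 : ContDiff ℝ 4 f0) (hf1 : ContDiff ℝ 4 f1)
    (hG0 : ∀ x ∈ Ioo (0 : ℝ) 1, 0 < iteratedDeriv 2 (Gt f0 f1 0) x)
    (hG1 : ∀ x ∈ Ioo (0 : ℝ) 1, 0 < iteratedDeriv 2 (Gt f0 f1 1) x)
    {δ : ℝ} (hδ : 0 < δ) :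
    ∃ C : ℝ, 0 < C ∧
      ∀ N : ℕ, 1 ≤ N → ∀ t ∈ Icc (0 : ℝ) 1, ∀ α ∈ Ioc 0 (1 - δ),
        |Qnorm (Gt f0 f1 t) N α -
            (2 * Real.pi) ^ ((3 : ℝ) / 2) *
              (N * iteratedDeriv 2 (Gt f0 f1 t) α) ^ (-(1 : ℝ) / 2)|
          ≤ C * (N * iteratedDeriv 2 (Gt f0 f1 t) α) ^ (-(1 : ℝ) / 2) * (N * α)⁻¹ := by
  obtain ⟨c, hc, K, hK, hG⟩ := exists_guilleminBounds_Gt hf0 hf1 hG0 hG1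
  exact ⟨normingErrorConst c K δ, normingErrorConst_pos hc hK hδ,
    fun N hN t ht α hα ↦ (hG t ht).abs_Qnorm_sub_le hc hα hδ hN⟩

theorem bergman_cp1_interior_laplace_asymptotics_of_Q
    (f0 f1 : ℝ → ℝ) (hf0 : ContDiff ℝ (⊤ : ℕ∞) f0) (hf1 : ContDiff ℝ (⊤ : ℕ∞) f1)
    (hG0 : ∀ x ∈ Set.Ioo (0:ℝ) 1, 0 < iteratedDeriv 2 (Gt f0 f1 0) x)
    (hG1 : ∀ x ∈ Set.Ioo (0:ℝ) 1, 0 < iteratedDeriv 2 (Gt f0 f1 1) x) :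
    ∃ C : ℝ, 0 < C ∧
      ∀ N : ℕ, 1 ≤ N → ∀ t ∈ Set.Icc (0:ℝ) 1, ∀ α : ℝ,
        (N : ℝ) ^ (-(3:ℝ)/4) ≤ α → α ≤ 2/3 →
        |Qnorm (Gt f0 f1 t) N α -
            (2 * Real.pi) ^ ((3:ℝ)/2) *
              ((N : ℝ) * iteratedDeriv 2 (Gt f0 f1 t) α) ^ (-(1:ℝ)/2)|
          ≤ C * ((N : ℝ) * iteratedDeriv 2 (Gt f0 f1 t) α) ^ (-(1:ℝ)/2) * ((N:ℝ) * α)⁻¹ := by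
  obtain ⟨C, hC, hbound⟩ := bergman_cp1_interior_laplace_asymptotics_of_Q_general
    (contDiff_infty.1 hf0 4) (contDiff_infty.1 hf1 4) hG0 hG1 (δ := 1 / 3) (by norm_num)
  exact ⟨C, hC, fun N hN t ht α hα hα' ↦ hbound N hN t ht α
    ⟨(Real.rpow_pos_of_pos (by exact_mod_cast hN) _).trans_le hα, by linarith⟩⟩
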